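/- Let σ ≥ 1 be an integer, let ρ : ℕ → ℝ be nonnegative with ∑_{t=0}^∞ ρ(t)² < ∞, and let r̃ : ℕ → ℕ be nondecreasing such that r̃(k+t) − r̃(k) ≤ tσ for all k, t ≥ 0 and r̃(k + σ² + σ) ≥ r̃(k + σ) + σ for all k ≥ 0. Then ∑_{k=0}^{∞} ( ∑_{t = r̃(k) ∸ σ}^{ r̃(k+σ) − 1 } ρ(t) )² ≤ σ²(σ+1)² ∑_{t=0}^{∞} ρ(t)², where m ∸ σ denotes truncated subtraction max(m − σ, 0). -/

import Mathlib

/-! Each window has length at most `σ² + σ`, so by Cauchy–Schwarz the squared sum over it is at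
most `σ² + σ` times the sum of the squares. Summing over all windows, each `ρ(t)²` is counted once
for every window that contains `t`. If `m` is the first such window, the separation hypothesis
places every window of index at least `m + σ² + σ` to the right of `t`, so there are at most
`σ² + σ` of them. -/

theorem sum_sum_le_nsmul_sum_biUnion {ι α N : Type*} [DecidableEq α] [AddCommMonoid N]
    [PartialOrder N] [IsOrderedAddMonoid N] (u : Finset ι) (s : ι → Finset α) {M : ℕ}
    (hoverlap : ∀ a, {i | a ∈ s i}.encard ≤ M) {g : α → N} (hg : ∀ a, 0 ≤ g a) :
    ∑ i ∈ u, ∑ a ∈ s i, g a ≤ M • ∑ a ∈ u.biUnion s, g a := by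
  have hcard (a : α) : ({i ∈ u | a ∈ s i} : Finset ι).card ≤ M := by
    have hsub : (↑({i ∈ u | a ∈ s i} : Finset ι) : Set ι) ⊆ {i | a ∈ s i} :=
      fun i hi => (Finset.mem_filter.mp hi).2
    rw [← Nat.cast_le (α := ℕ∞), ← Set.encard_coe_eq_coe_finsetCard]
    exact (Set.encard_le_encard hsub).trans (hoverlap a)
  calc
    ∑ i ∈ u, ∑ a ∈ s i, g a = ∑ a ∈ u.biUnion s, ∑ i ∈ u with a ∈ s i, g a :=
      Finset.sum_comm' fun i a => by
        simp only [Finset.mem_filter, Finset.mem_biUnion]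
        exact ⟨fun h => ⟨h, i, h⟩, And.left⟩
    _ ≤ ∑ a ∈ u.biUnion s, M • g a := Finset.sum_le_sum fun a _ => by
      rw [Finset.sum_const]
      exact nsmul_le_nsmul_left (hg a) (hcard a)
    _ = M • ∑ a ∈ u.biUnion s, g a := Finset.sum_nsmul _ _ _

theorem summable_sq_sum_and_tsum_sq_sum_le {ι α : Type*} {s : ι → Finset α} {C M : ℕ}
    (hcard : ∀ i, (s i).card ≤ C) (hoverlap : ∀ a, {i | a ∈ s i}.encard ≤ M)
    {f : α → ℝ} (hf : Summable fun a => f a ^ 2) :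
    Summable (fun i => (∑ a ∈ s i, f a) ^ 2) ∧
      ∑' i, (∑ a ∈ s i, f a) ^ 2 ≤ C * M * ∑' a, f a ^ 2 := by
  classical
  have hsq_sum (i : ι) : (∑ a ∈ s i, f a) ^ 2 ≤ C * ∑ a ∈ s i, f a ^ 2 :=
    sq_sum_le_card_mul_sum_sq.trans <| by gcongr; exact hcard i
  have hpartial (u : Finset ι) :
      ∑ i ∈ u, (∑ a ∈ s i, f a) ^ 2 ≤ C * M * ∑' a, f a ^ 2 := calc
    _ ≤ ∑ i ∈ u, C * ∑ a ∈ s i, f a ^ 2 := Finset.sum_le_sum fun i _ => hsq_sum i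
    _ = C * ∑ i ∈ u, ∑ a ∈ s i, f a ^ 2 := (Finset.mul_sum _ _ _).symm
    _ ≤ C * (M • ∑ a ∈ u.biUnion s, f a ^ 2) := by
      gcongr
      exact sum_sum_le_nsmul_sum_biUnion u s hoverlap fun a => sq_nonneg (f a)
    _ = C * M * ∑ a ∈ u.biUnion s, f a ^ 2 := by rw [nsmul_eq_mul, mul_assoc]
    _ ≤ C * M * ∑' a, f a ^ 2 := by
      gcongr
      exact hf.sum_le_tsum _ fun a _ => sq_nonneg (f a)
  exact ⟨summable_of_sum_le (fun _ => sq_nonneg _) hpartial,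
    Real.tsum_le_of_sum_le (fun _ => sq_nonneg _) hpartial⟩

section Window

variable {r : ℕ → ℕ} {a d L p : ℕ}

theorem card_Ico_sub_le (hgrow : ∀ k, r (k + a) ≤ r k + L) (k : ℕ) :
    (Finset.Ico (r k - d) (r (k + a))).card ≤ L + d := by
  have := hgrow k
  rw [Nat.card_Ico]
  omega

theorem encard_setOf_mem_Ico_sub_le (hr : Monotone r)
    (hsep : ∀ k, r (k + a) + d ≤ r (k + p + a)) (t : ℕ) :
    {k | t ∈ Finset.Ico (r k - d) (r (k + a))}.encard ≤ ↑(p + a) := by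
  set K := {k | t ∈ Finset.Ico (r k - d) (r (k + a))}
  obtain hK | hK := K.eq_empty_or_nonempty
  · simp [hK]
  set m := sInf K
  have hmK : m ∈ K := Nat.sInf_mem hK
  have ht_lt : t < r (m + a) := (Finset.mem_Ico.mp hmK).2
  have hsub : K ⊆ Finset.Ico m (m + (p + a)) := by
    intro k hk
    have hk_left : r k - d ≤ t := (Finset.mem_Ico.mp hk).1
    refine Finset.mem_coe.mpr (Finset.mem_Ico.mpr ⟨Nat.sInf_le hk, ?_⟩)
    by_contra! hmk
    have hright : t + d < r k := calc
      t + d < r (m + a) + d := by gcongr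
      _ ≤ r (m + p + a) := hsep m
      _ ≤ r k := hr (by omega)
    omega
  calc
    K.encard ≤ (Finset.Ico m (m + (p + a)) : Set ℕ).encard := Set.encard_le_encard hsub
    _ = ↑(p + a) := by
      rw [Set.encard_coe_eq_coe_finsetCard, Nat.card_Ico, Nat.add_sub_cancel_left]

theorem stepsize_window_square_summable_general (hr : Monotone r)
    (hgrow : ∀ k, r (k + a) ≤ r k + L) (hsep : ∀ k, r (k + a) + d ≤ r (k + p + a))
    {ρ : ℕ → ℝ} (hρ : Summable fun t => ρ t ^ 2) :
    Summable (fun k => (∑ t ∈ Finset.Ico (r k - d) (r (k + a)), ρ t) ^ 2) ∧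
      ∑' k, (∑ t ∈ Finset.Ico (r k - d) (r (k + a)), ρ t) ^ 2 ≤
        ((L + d : ℕ) : ℝ) * ((p + a : ℕ) : ℝ) * ∑' t, ρ t ^ 2 :=
  summable_sq_sum_and_tsum_sq_sum_le (card_Ico_sub_le hgrow)
    (encard_setOf_mem_Ico_sub_le hr hsep) hρ

end Window

/-- Summability of the accumulated squared stepsize windows: if `σ ≥ 1`, `ρ ≥ 0` with
`∑ ρ(t)² < ∞`, and the nondecreasing counter `r̃` grows by at most `σ` per step and
satisfies `r̃(k+σ²+σ) ≥ r̃(k+σ) + σ`, then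
`∑_k (∑_{t=r̃(k)∸σ}^{r̃(k+σ)−1} ρ(t))² ≤ σ²(σ+1)² ∑_t ρ(t)²` (truncated subtraction). -/
theorem stepsize_window_square_summable (σ : ℕ) (hσ : 1 ≤ σ)
    (ρ : ℕ → ℝ) (hρ : ∀ t, 0 ≤ ρ t)
    (hρsq : Summable fun t => ρ t ^ 2)
    (r : ℕ → ℕ) (hrmono : Monotone r)
    (hgrow : ∀ k t, r (k + t) - r k ≤ t * σ)
    (hsep : ∀ k, r (k + σ) + σ ≤ r (k + σ ^ 2 + σ)) :
    Summable (fun k => (∑ t ∈ Finset.Ico (r k - σ) (r (k + σ)), ρ t) ^ 2) ∧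
    ∑' k, (∑ t ∈ Finset.Ico (r k - σ) (r (k + σ)), ρ t) ^ 2 ≤
      (σ : ℝ) ^ 2 * ((σ : ℝ) + 1) ^ 2 * ∑' t, ρ t ^ 2 :=
  (stepsize_window_square_summable_general hrmono
    (fun k => Nat.sub_le_iff_le_add'.mp (hgrow k σ)) hsep hρsq).imp_right
      fun hle => hle.trans_eq (by push_cast; ring)
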